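/- For every L > 0 there exist constants c₁ > 0 and c₂ > 0, depending only on L, with the following property: let ε ∈ (0,1], K > 0, T > 0, and let v : [0, T] × ℝ → ℝ be smooth, L-periodic in x, satisfy ∂ₜv = −∂ₓ( f_ε(v) ∂ₓ³ v ) on [0, T] × ℝ, and satisfy 0 < v(t,x) ≤ K for all (t,x). Set ū := (1/L)∫₀^L v(0,x) dx, a := ū²/√(ε + K²), and J(t) := (1/2)∫₀^L (∂ₓ v(t,x))² dx. Then for every t ∈ [0, T], J(t) ≤ e^{−c₁ a² t} J(0) + c₂ √ε · a · ∫₀^t ∫₀^L (∂ₓ² v(s,x))² dx ds. -/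

import Mathlib

/-!
Write `E = ∫ (∂ₓ² v)²` and `D = ∫ f_ε(v) (∂ₓ³ v)²`, so that the energy satisfies `J' = -D`, and let
`y` be a point where `|∂ₓ v|` is maximal. The function `v` descends from `v(y)` to the level `√ε`,
or to its minimum, at some point `β`. Above that level the mobility dominates the squared height
over the level, so integrating `(v - v(β)) ∂ₓ³ v` by parts bounds the change of `(∂ₓ v)²` between
`y` and `β` by `√D`. At `β` itself, a nonnegative function of height at most `√ε` has slope at most
a multiple of `(√ε E)^(1/3)`. Hence `max |∂ₓ v|` is controlled either by `√ε E` or by `D`. This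
suffices if the oscillation of `v` is comparable to its mean; otherwise `v` stays above half its
mean, the mobility is bounded below, and Poincaré's inequality applies. In both cases
`a² J ≤ 16 L⁴ D + 64 L² √ε a E`. The mean is conserved, so Grönwall's inequality gives the decay.
-/

open Set Function intervalIntegral

/-- The squared homogeneous Sobolev seminorm `∫₀ᴸ (∂ₓᵏ f)²` of an `L`-periodic function, over the
period `[0, L]`. The energy `J(t)` is `derivEnergy L 1 (v t) / 2`. -/
noncomputable def derivEnergy (L : ℝ) (k : ℕ) (f : ℝ → ℝ) : ℝ :=
  ∫ x in (0 : ℝ)..L, (deriv^[k] f x) ^ 2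

/-- The degenerate mobility `f_ε(s) = s⁴ / (ε + s²)`. -/
noncomputable def mobility (ε s : ℝ) : ℝ :=
  s ^ 4 / (ε + s ^ 2)

/-- The rate `∫₀ᴸ f_ε(f) (∂ₓ³ f)²` at which an `L`-periodic profile `f` dissipates energy. -/
noncomputable def dissipation (ε L : ℝ) (f : ℝ → ℝ) : ℝ :=
  ∫ x in (0 : ℝ)..L, mobility ε (f x) * (deriv^[3] f x) ^ 2

section Periodic

variable {f : ℝ → ℝ} {L a b : ℝ}

theorem sq_integral_le_mul_integral_sq (hab : a ≤ b)
    (hf : IntervalIntegrable f MeasureTheory.volume a b)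
    (hf2 : IntervalIntegrable (fun x => f x ^ 2) MeasureTheory.volume a b) :
    (∫ x in a..b, f x) ^ 2 ≤ (b - a) * ∫ x in a..b, f x ^ 2 := by
  have hnonneg (c : ℝ) :
      0 ≤ (b - a) * (c * c) + (-2 * ∫ x in a..b, f x) * c + ∫ x in a..b, f x ^ 2 := by
    have hexpand : ∫ x in a..b, (c - f x) ^ 2
        = ∫ x in a..b, (c ^ 2 - 2 * c * f x + f x ^ 2) := by
      simp only [sub_sq]
    rw [integral_add (intervalIntegrable_const.sub (hf.const_mul _)) hf2,
      integral_sub intervalIntegrable_const (hf.const_mul _), integral_const_mul, integral_const,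
      smul_eq_mul] at hexpand
    have hsq : 0 ≤ ∫ x in a..b, (c - f x) ^ 2 := integral_nonneg hab fun x _ => sq_nonneg _
    linarith
  have hdiscrim := discrim_le_zero hnonneg
  rw [discrim] at hdiscrim
  linarith

theorem periodic_deriv {𝕜 F : Type*} [NontriviallyNormedField 𝕜] [NormedAddCommGroup F]
    [NormedSpace 𝕜 F] {g : 𝕜 → F} {c : 𝕜} (hg : Periodic g c) : Periodic (deriv g) c := fun x => by
  rw [← deriv_comp_add_const, hg.funext]

theorem periodic_iterate_deriv {𝕜 F : Type*} [NontriviallyNormedField 𝕜] [NormedAddCommGroup F]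
    [NormedSpace 𝕜 F] {g : 𝕜 → F} {c : 𝕜} (hg : Periodic g c) :
    ∀ k : ℕ, Periodic (deriv^[k] g) c
  | 0 => hg
  | k + 1 => by
    rw [iterate_succ_apply']
    exact periodic_deriv (periodic_iterate_deriv hg k)

theorem integral_le_integral_period (hf : Continuous f) (hnonneg : ∀ x, 0 ≤ f x)
    (hper : Periodic f L) (hab : a ≤ b) (hba : b ≤ a + L) :
    ∫ x in a..b, f x ≤ ∫ x in (0 : ℝ)..L, f x := by
  rw [← zero_add L, hper.intervalIntegral_add_eq 0 a]
  exact integral_mono_interval le_rfl hab hba (.of_forall hnonneg) (hf.intervalIntegrable _ _)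

theorem integral_deriv_eq_zero_of_periodic (hf : ContDiff ℝ 1 f) (hper : Periodic f L) :
    ∫ x in (0 : ℝ)..L, deriv f x = 0 := by
  rw [integral_deriv_eq_sub (fun x _ => hf.differentiable_one x)
    (hf.continuous_deriv_one.intervalIntegrable _ _), hper.eq, sub_self]

theorem integral_mul_deriv_of_periodic {g : ℝ → ℝ} (hf : ContDiff ℝ 1 f) (hg : ContDiff ℝ 1 g)
    (hfper : Periodic f L) (hgper : Periodic g L) :
    ∫ x in (0 : ℝ)..L, f x * deriv g x = -∫ x in (0 : ℝ)..L, deriv f x * g x := by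
  rw [integral_mul_deriv_eq_deriv_mul
    (fun x _ => (hf.differentiable_one x).hasDerivAt)
    (fun x _ => (hg.differentiable_one x).hasDerivAt)
    (hf.continuous_deriv_one.intervalIntegrable _ _)
    (hg.continuous_deriv_one.intervalIntegrable _ _), hfper.eq, hgper.eq, sub_self, zero_sub]

theorem exists_forall_le_of_periodic {Y : Type*} [LinearOrder Y] [TopologicalSpace Y]
    [ClosedIicTopology Y] {g : ℝ → Y} (hg : Continuous g) (hper : Periodic g L) (hL : L ≠ 0) :
    ∃ y, ∀ x, g y ≤ g x := by
  obtain ⟨_, ⟨y, rfl⟩, hy⟩ := (hper.compact_of_continuous hL hg).exists_isLeast (range_nonempty g)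
  exact ⟨y, fun x => hy (mem_range_self x)⟩

theorem derivEnergy_nonneg (hL : 0 ≤ L) (k : ℕ) : 0 ≤ derivEnergy L k f :=
  integral_nonneg hL fun _ _ => sq_nonneg _

theorem derivEnergy_deriv (k : ℕ) : derivEnergy L k (deriv f) = derivEnergy L (k + 1) f :=
  rfl

theorem sq_sub_le_mul_derivEnergy (hf : ContDiff ℝ 1 f) (hper : Periodic f L) {x y : ℝ}
    (hxy : |x - y| ≤ L) : (f x - f y) ^ 2 ≤ |x - y| * derivEnergy L 1 f := by
  wlog hyx : y ≤ x generalizing x y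
  · rw [sub_sq_comm, abs_sub_comm]
    exact this (by rwa [abs_sub_comm]) (le_of_not_ge hyx)
  rw [abs_of_nonneg (sub_nonneg.2 hyx)] at hxy ⊢
  have hcont : Continuous (deriv f) := hf.continuous_deriv_one
  calc (f x - f y) ^ 2 = (∫ z in y..x, deriv f z) ^ 2 := by
        rw [integral_deriv_eq_sub (fun z _ => hf.differentiable_one z)
          (hcont.intervalIntegrable _ _)]
    _ ≤ (x - y) * ∫ z in y..x, deriv f z ^ 2 := sq_integral_le_mul_integral_sq hyx
        (hcont.intervalIntegrable _ _) ((hcont.pow 2).intervalIntegrable _ _)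
    _ ≤ (x - y) * derivEnergy L 1 f := by
        refine mul_le_mul_of_nonneg_left ?_ (sub_nonneg.2 hyx)
        exact integral_le_integral_period (hcont.pow 2) (fun z => sq_nonneg _)
          (fun z => by rw [periodic_deriv hper z]) hyx (by linarith)

theorem sq_sub_le_period_mul_derivEnergy (hf : ContDiff ℝ 1 f) (hper : Periodic f L)
    (hL : 0 < L) (x y : ℝ) : (f x - f y) ^ 2 ≤ L * derivEnergy L 1 f := by
  obtain ⟨z, hz, hfz⟩ := hper.exists_mem_Ico hL x y
  have hdist : |z - y| ≤ L := by
    rw [abs_of_nonneg (by linarith [hz.1])]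
    linarith [hz.2]
  rw [hfz]
  exact (sq_sub_le_mul_derivEnergy hf hper hdist).trans
    (mul_le_mul_of_nonneg_right hdist (derivEnergy_nonneg hL.le 1))

theorem sq_deriv_le_period_mul_derivEnergy (hf : ContDiff ℝ 2 f) (hper : Periodic f L)
    (hL : 0 < L) (x : ℝ) : deriv f x ^ 2 ≤ L * derivEnergy L 2 f := by
  obtain ⟨z, -, hz⟩ := exists_deriv_eq_zero hL hf.continuous.continuousOn hper.eq.symm
  simpa only [hz, sub_zero, derivEnergy_deriv] using
    sq_sub_le_period_mul_derivEnergy hf.deriv' (periodic_deriv hper) hL x z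

theorem derivEnergy_one_le_of_sq_deriv_le (hf : ContDiff ℝ 1 f) (hL : 0 ≤ L) {C : ℝ}
    (hC : ∀ x, deriv f x ^ 2 ≤ C) : derivEnergy L 1 f ≤ L * C :=
  calc derivEnergy L 1 f ≤ ∫ _ in (0 : ℝ)..L, C :=
        integral_mono hL ((hf.continuous_deriv_one.pow 2).intervalIntegrable _ _)
          intervalIntegrable_const hC
    _ = L * C := by rw [integral_const, smul_eq_mul, sub_zero]

theorem derivEnergy_one_le_derivEnergy_two (hf : ContDiff ℝ 2 f) (hper : Periodic f L)
    (hL : 0 < L) : derivEnergy L 1 f ≤ L ^ 2 * derivEnergy L 2 f := by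
  rw [sq, mul_assoc]
  exact derivEnergy_one_le_of_sq_deriv_le (hf.of_le one_le_two) hL.le
    (sq_deriv_le_period_mul_derivEnergy hf hper hL)

end Periodic

section Slope

variable {f : ℝ → ℝ} {L : ℝ}

theorem deriv_eq_zero_of_forall_abs_le {y : ℝ} (hy : ∀ x, |f x| ≤ |f y|) : deriv f y = 0 := by
  rcases le_total 0 (f y) with hpos | hneg
  · refine IsLocalMax.deriv_eq_zero (.of_forall fun x => ?_)
    simpa only [abs_of_nonneg hpos] using (le_abs_self _).trans (hy x)
  · refine IsLocalMin.deriv_eq_zero (.of_forall fun x => ?_)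
    simpa only [abs_of_nonpos hneg, neg_le_neg_iff] using (neg_le_abs _).trans (hy x)

theorem le_add_deriv_mul_add_of_abs_deriv_sub_le (hf : Differentiable ℝ f) {y r C : ℝ}
    (hr : ∀ x, |x - y| ≤ r → |deriv f x - deriv f y| ≤ C) {h : ℝ} (hh : |h| ≤ r) :
    f (y + h) ≤ f y + deriv f y * h + C * |h| := by
  have hderiv (x : ℝ) : HasDerivAt (fun z => f z - deriv f y * z) (deriv f x - deriv f y) x := by
    simpa only [id, mul_one] using
      (hf x).hasDerivAt.fun_sub ((hasDerivAt_id x).const_mul (deriv f y))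
  have hbound := (convex_closedBall y r).norm_image_sub_le_of_norm_hasDerivWithin_le
    (fun x _ => (hderiv x).hasDerivWithinAt) hr
    (Metric.mem_closedBall_self ((abs_nonneg h).trans hh))
    (by simpa [Real.dist_eq] using hh : y + h ∈ Metric.closedBall y r)
  rw [Real.norm_eq_abs, Real.norm_eq_abs, add_sub_cancel_left] at hbound
  linarith [le_abs_self (f (y + h) - deriv f y * (y + h) - (f y - deriv f y * y))]

/-- With `p = f' y` and `E = ∫ (f'')²`, Hölder continuity keeps `|f' - p| ≤ |p| / 2` up to distance
`p² / (4E)` from `y`. Walking that far downhill lowers `f` by at least `|p|³ / (8E)`, which cannot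
exceed `f y`. -/
theorem abs_deriv_pow_three_le (hf : ContDiff ℝ 2 f) (hper : Periodic f L) (hL : 0 < L)
    (hnonneg : ∀ x, 0 ≤ f x) (y : ℝ) : |deriv f y| ^ 3 ≤ 8 * f y * derivEnergy L 2 f := by
  set p := deriv f y
  set E := derivEnergy L 2 f
  have hpE : p ^ 2 ≤ L * E := sq_deriv_le_period_mul_derivEnergy hf hper hL y
  have hE : 0 ≤ E := derivEnergy_nonneg hL.le 2
  rcases hE.eq_or_lt with hE0 | hEpos
  · have hp0 : p = 0 := by
      rw [← hE0, mul_zero] at hpE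
      exact pow_eq_zero_iff two_ne_zero |>.1 (le_antisymm hpE (sq_nonneg p))
    rw [hp0, ← hE0, abs_zero, zero_pow three_ne_zero, mul_zero]
  have hradius : p ^ 2 / (4 * E) ≤ L := by
    rw [div_le_iff₀ (by positivity)]
    nlinarith
  have hslope (x : ℝ) (hx : |x - y| ≤ p ^ 2 / (4 * E)) : |deriv f x - p| ≤ |p| / 2 := by
    refine abs_le_of_sq_le_sq ?_ (by positivity)
    calc (deriv f x - p) ^ 2 ≤ |x - y| * E :=
          sq_sub_le_mul_derivEnergy hf.deriv' (periodic_deriv hper) (hx.trans hradius)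
      _ ≤ p ^ 2 / (4 * E) * E := by gcongr
      _ = (|p| / 2) ^ 2 := by
        rw [div_pow, sq_abs]
        field_simp
        norm_num
  have hstep : |-(p * |p|) / (4 * E)| = p ^ 2 / (4 * E) := by
    rw [abs_div, abs_neg, abs_mul, abs_abs, abs_mul_abs_self, ← sq, abs_of_pos (by positivity)]
  have hdescent : 0 ≤ f y + p * (-(p * |p|) / (4 * E)) + |p| / 2 * (p ^ 2 / (4 * E)) := by
    have h := le_add_deriv_mul_add_of_abs_deriv_sub_le (hf.differentiable two_ne_zero) hslope
      hstep.le
    rw [hstep] at h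
    exact (hnonneg _).trans h
  have hdrop : f y + p * (-(p * |p|) / (4 * E)) + |p| / 2 * (p ^ 2 / (4 * E))
      = f y - |p| ^ 3 / (8 * E) := by
    rw [← sq_abs p, neg_div, mul_neg, ← mul_div_assoc, ← mul_assoc, ← sq, ← sq_abs p]
    ring
  rw [hdrop, sub_nonneg, div_le_iff₀ (by positivity)] at hdescent
  linarith

theorem abs_deriv_pow_three_le_of_le_or_forall_le (hf : ContDiff ℝ 2 f) (hper : Periodic f L)
    (hL : 0 < L) (hnonneg : ∀ x, 0 ≤ f x) {κ y : ℝ} (hκ : 0 ≤ κ)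
    (hy : f y ≤ κ ∨ ∀ x, f y ≤ f x) : |deriv f y| ^ 3 ≤ 8 * κ * derivEnergy L 2 f := by
  have hE : 0 ≤ derivEnergy L 2 f := derivEnergy_nonneg hL.le 2
  rcases hy with hle | hmin
  · exact (abs_deriv_pow_three_le hf hper hL hnonneg y).trans (by gcongr)
  · rw [IsLocalMin.deriv_eq_zero (.of_forall hmin), abs_zero, zero_pow three_ne_zero]
    positivity

theorem exists_first_mem_Icc_eq {X Y : Type*} [ConditionallyCompleteLinearOrder X]
    [TopologicalSpace X] [OrderTopology X] [DenselyOrdered X] [LinearOrder Y] [TopologicalSpace Y]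
    [OrderClosedTopology Y] {g : X → Y} {a b : X} {c : Y} (hab : a ≤ b)
    (hg : ContinuousOn g (Icc a b)) (hb : g b ≤ c) (ha : c ≤ g a) :
    ∃ β ∈ Icc a b, g β = c ∧ ∀ x ∈ Icc a β, c ≤ g x := by
  have hclosed : IsClosed (Icc a b ∩ g ⁻¹' Iic c) :=
    hg.preimage_isClosed_of_isClosed isClosed_Icc isClosed_Iic
  obtain ⟨β, ⟨hβ, hβc⟩, hfirst⟩ :=
    (isCompact_Icc.of_isClosed_subset hclosed inter_subset_left).exists_isLeast
      ⟨b, right_mem_Icc.2 hab, hb⟩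
  obtain ⟨z, hz, hzc⟩ :=
    intermediate_value_Icc' hβ.1 (hg.mono (Icc_subset_Icc_right hβ.2)) ⟨hβc, ha⟩
  have hzβ : β ≤ z := hfirst ⟨⟨hz.1, hz.2.trans hβ.2⟩, hzc.le⟩
  obtain rfl : z = β := le_antisymm hz.2 hzβ
  refine ⟨z, hβ, hzc, fun x hx => ?_⟩
  by_contra! hlt
  obtain rfl : x = z := le_antisymm hx.2 (hfirst ⟨⟨hx.1, hx.2.trans hβ.2⟩, hlt.le⟩)
  exact hlt.ne hzc

end Slope

section FunctionalInequality

variable {f : ℝ → ℝ} {ε L : ℝ}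

theorem mobility_nonneg (hε : 0 ≤ ε) (s : ℝ) : 0 ≤ mobility ε s := by
  unfold mobility
  positivity

theorem contDiff_mobility {n : WithTop ℕ∞} (hε : 0 < ε) : ContDiff ℝ n (mobility ε) :=
  (contDiff_id.pow 4).div (contDiff_const.add (contDiff_id.pow 2)) fun x => by positivity

theorem sq_sub_le_mobility (hε : 0 < ε) {c s : ℝ} (hc : √ε ≤ c) (hs : c ≤ s) :
    (s - c) ^ 2 ≤ mobility ε s := by
  have hεc : ε ≤ c ^ 2 := (Real.sqrt_le_left ((Real.sqrt_nonneg ε).trans hc)).1 hc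
  have hc0 : 0 ≤ c := (Real.sqrt_nonneg ε).trans hc
  have hsub : (s - c) ^ 2 ≤ s ^ 2 - ε := by nlinarith
  rw [mobility, le_div_iff₀ (by positivity)]
  calc (s - c) ^ 2 * (ε + s ^ 2) ≤ (s ^ 2 - ε) * (ε + s ^ 2) := by gcongr
    _ ≤ s ^ 4 := by nlinarith

theorem continuous_mobility_mul_sq (hε : 0 < ε) (hf : ContDiff ℝ 3 f) :
    Continuous fun x => mobility ε (f x) * (deriv^[3] f x) ^ 2 :=
  ((contDiff_mobility (n := 0) hε).continuous.comp hf.continuous).mul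
    ((hf.iterate_deriv' 0 3).continuous.pow 2)

theorem dissipation_nonneg (hε : 0 ≤ ε) (hL : 0 ≤ L) : 0 ≤ dissipation ε L f :=
  integral_nonneg hL fun _ _ => mul_nonneg (mobility_nonneg hε _) (sq_nonneg _)

theorem hasDerivAt_iterate_deriv {𝕜 F : Type*} [NontriviallyNormedField 𝕜] [NormedAddCommGroup F]
    [NormedSpace 𝕜 F] {g : 𝕜 → F} {n k : ℕ} (hg : ContDiff 𝕜 n g) (hk : k < n) (x : 𝕜) :
    HasDerivAt (deriv^[k] g) (deriv^[k + 1] g x) x := by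
  rw [iterate_succ_apply']
  have hk₁ : ContDiff 𝕜 1 (deriv^[k] g) :=
    (hg.of_le (by exact_mod_cast (by omega : 1 + k ≤ n))).iterate_deriv' 1 k
  exact (hk₁.differentiable_one x).hasDerivAt

theorem integral_sub_const_mul_iterate_deriv_three (hf : ContDiff ℝ 3 f) (a b c : ℝ) :
    ∫ x in a..b, (f x - c) * deriv^[3] f x
      = ((f b - c) * deriv^[2] f b - deriv f b ^ 2 / 2)
        - ((f a - c) * deriv^[2] f a - deriv f a ^ 2 / 2) := by
  refine integral_eq_sub_of_hasDerivAt
    (f := fun x => (f x - c) * deriv^[2] f x - deriv f x ^ 2 / 2) (fun x _ => ?_)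
    (((hf.continuous.sub continuous_const).mul
      (hf.iterate_deriv' 0 3).continuous).intervalIntegrable _ _)
  have h₀ : HasDerivAt f (deriv f x) x := hasDerivAt_iterate_deriv hf (by norm_num : 0 < 3) x
  have h₁ : HasDerivAt (deriv f) (deriv^[2] f x) x :=
    hasDerivAt_iterate_deriv hf (by norm_num : 1 < 3) x
  have h₂ : HasDerivAt (deriv^[2] f) (deriv^[3] f x) x :=
    hasDerivAt_iterate_deriv hf (by norm_num : 2 < 3) x
  convert ((h₀.sub_const c).fun_mul h₂).fun_sub ((h₁.fun_pow 2).div_const 2) using 1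
  push_cast
  ring

/-- Above the level `√ε` the mobility dominates the squared height over that level, so dissipation
controls how much `(f')²` can change there. -/
theorem sq_sq_deriv_sub_sq_deriv_le_dissipation (hf : ContDiff ℝ 3 f) (hper : Periodic f L)
    (hε : 0 < ε) {c y β : ℝ} (hc : √ε ≤ c) (hyβ : y ≤ β) (hβ : β ≤ y + L) (hfβ : f β = c)
    (habove : ∀ x ∈ Icc y β, c ≤ f x) (hy : deriv^[2] f y = 0) :
    (deriv f y ^ 2 - deriv f β ^ 2) ^ 2 ≤ 4 * (L * dissipation ε L f) := by
  have hcont : Continuous fun x => (f x - c) * deriv^[3] f x :=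
    (hf.continuous.sub continuous_const).mul (hf.iterate_deriv' 0 3).continuous
  have htransport : deriv f y ^ 2 - deriv f β ^ 2
      = 2 * ∫ x in y..β, (f x - c) * deriv^[3] f x := by
    rw [integral_sub_const_mul_iterate_deriv_three hf, hfβ, hy]
    ring
  have hcont' : Continuous fun x => mobility ε (f x) * (deriv^[3] f x) ^ 2 :=
    continuous_mobility_mul_sq hε hf
  have hmono : ∫ x in y..β, ((f x - c) * deriv^[3] f x) ^ 2 ≤ dissipation ε L f :=
    calc ∫ x in y..β, ((f x - c) * deriv^[3] f x) ^ 2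
        ≤ ∫ x in y..β, mobility ε (f x) * (deriv^[3] f x) ^ 2 := by
          refine integral_mono_on hyβ ((hcont.pow 2).intervalIntegrable _ _)
            (hcont'.intervalIntegrable _ _) fun x hx => ?_
          rw [mul_pow]
          exact mul_le_mul_of_nonneg_right (sq_sub_le_mobility hε hc (habove x hx)) (sq_nonneg _)
      _ ≤ dissipation ε L f :=
          integral_le_integral_period hcont'
            (fun x => mul_nonneg (mobility_nonneg hε.le _) (sq_nonneg _))
            (fun x => by rw [hper x, periodic_iterate_deriv hper 3 x]) hyβ hβ
  have hlength : (β - y) * ∫ x in y..β, ((f x - c) * deriv^[3] f x) ^ 2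
      ≤ L * dissipation ε L f :=
    mul_le_mul (by linarith) hmono (integral_nonneg hyβ fun _ _ => sq_nonneg _) (by linarith)
  rw [htransport, mul_pow]
  linarith [sq_integral_le_mul_integral_sq hyβ (hcont.intervalIntegrable _ _)
    ((hcont.pow 2).intervalIntegrable _ _)]

theorem exists_abs_deriv_pow_three_le_and_sq_sub_sq_le (hf : ContDiff ℝ 3 f) (hper : Periodic f L)
    (hL : 0 < L) (hnonneg : ∀ x, 0 ≤ f x) (hε : 0 < ε) {y : ℝ} (hy : deriv^[2] f y = 0) :
    ∃ β, |deriv f β| ^ 3 ≤ 8 * √ε * derivEnergy L 2 f ∧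
      (deriv f y ^ 2 - deriv f β ^ 2) ^ 2 ≤ 4 * (L * dissipation ε L f) := by
  obtain ⟨m, hm⟩ := exists_forall_le_of_periodic hf.continuous hper hL.ne'
  obtain ⟨x₀, hx₀, hfx₀⟩ := hper.exists_mem_Ico hL m y
  have hslope {x : ℝ} (hx : f x ≤ max √ε (f m)) :
      |deriv f x| ^ 3 ≤ 8 * √ε * derivEnergy L 2 f :=
    abs_deriv_pow_three_le_of_le_or_forall_le (hf.of_le (by norm_num)) hper hL hnonneg
      (Real.sqrt_nonneg ε) ((le_max_iff.1 hx).imp_right fun h z => h.trans (hm z))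
  rcases le_total (f y) (max √ε (f m)) with hlow | hhigh
  · refine ⟨y, hslope hlow, ?_⟩
    rw [sub_self, zero_pow two_ne_zero]
    exact mul_nonneg zero_le_four (mul_nonneg hL.le (dissipation_nonneg hε.le hL.le))
  · obtain ⟨β, hβ, hfβ, habove⟩ := exists_first_mem_Icc_eq hx₀.1 hf.continuous.continuousOn
      (hfx₀ ▸ le_max_right √ε (f m)) hhigh
    exact ⟨β, hslope hfβ.le, sq_sq_deriv_sub_sq_deriv_le_dissipation hf hper hε (le_max_left _ _)
      hβ.1 (hβ.2.trans hx₀.2.le) hfβ habove hy⟩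

theorem exists_abs_deriv_max_and_le (hf : ContDiff ℝ 3 f) (hper : Periodic f L)
    (hL : 0 < L) (hnonneg : ∀ x, 0 ≤ f x) (hε : 0 < ε) :
    ∃ M, 0 ≤ M ∧ (∀ x, |deriv f x| ≤ M) ∧
      (M ^ 3 ≤ 64 * √ε * derivEnergy L 2 f ∨ M ^ 4 ≤ 8 * (L * dissipation ε L f)) := by
  have hcont : Continuous fun x => -|deriv f x| := (hf.continuous_deriv (by norm_num)).abs.neg
  obtain ⟨y, hy⟩ := exists_forall_le_of_periodic hcont
    (fun x => by rw [periodic_deriv hper x]) hL.ne'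
  replace hy : ∀ x, |deriv f x| ≤ |deriv f y| := fun x => neg_le_neg_iff.1 (hy x)
  obtain ⟨β, hslope, htransport⟩ :=
    exists_abs_deriv_pow_three_le_and_sq_sub_sq_le hf hper hL hnonneg hε
      (deriv_eq_zero_of_forall_abs_le hy : deriv^[2] f y = 0)
  refine ⟨|deriv f y|, abs_nonneg _, hy, ?_⟩
  rw [← sq_abs (deriv f y), ← sq_abs (deriv f β)] at htransport
  rcases le_total |deriv f y| (2 * |deriv f β|) with hflat | hsteep
  · left
    calc |deriv f y| ^ 3 ≤ (2 * |deriv f β|) ^ 3 := by gcongr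
      _ ≤ 64 * √ε * derivEnergy L 2 f := by linarith [mul_pow 2 |deriv f β| 3]
  · right
    have hdrop : 3 / 4 * |deriv f y| ^ 2 ≤ |deriv f y| ^ 2 - |deriv f β| ^ 2 := by
      nlinarith [abs_nonneg (deriv f β)]
    have hsq : (3 / 4 * |deriv f y| ^ 2) ^ 2 ≤ (|deriv f y| ^ 2 - |deriv f β| ^ 2) ^ 2 := by
      gcongr
    nlinarith [pow_nonneg (abs_nonneg (deriv f y)) 4]

end FunctionalInequality

section Coercivity

variable {f : ℝ → ℝ} {ε L K u : ℝ}

/-- The mean `ū` of an `L`-periodic function over the period `[0, L]`. -/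
noncomputable def periodMean (L : ℝ) (f : ℝ → ℝ) : ℝ :=
  (1 / L) * ∫ x in (0 : ℝ)..L, f x

/-- The constant `a = u² / √(ε + K²)` attached to a profile of mean `u` and height at most `K`: up
to a numerical factor, `a²` bounds the mobility from below on `[u / 2, K]`. -/
noncomputable def coercivityScale (ε K u : ℝ) : ℝ :=
  u ^ 2 / √(ε + K ^ 2)

theorem coercivityScale_nonneg : 0 ≤ coercivityScale ε K u := by
  unfold coercivityScale
  positivity

theorem coercivityScale_le_self (hε : 0 < ε) (hu : 0 ≤ u) (huK : u ≤ K) :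
    coercivityScale ε K u ≤ u := by
  have hK : u ≤ √(ε + K ^ 2) := Real.le_sqrt_of_sq_le (by nlinarith)
  rw [coercivityScale, div_le_iff₀ (by positivity), sq]
  gcongr

theorem sq_coercivityScale_le_mobility (hε : 0 < ε) (hu : 0 ≤ u) {s : ℝ} (hus : u / 2 ≤ s)
    (hsK : s ≤ K) : coercivityScale ε K u ^ 2 / 16 ≤ mobility ε s := by
  have hs : 0 ≤ s := by linarith
  calc coercivityScale ε K u ^ 2 / 16 = (u / 2) ^ 4 / (ε + K ^ 2) := by
        rw [coercivityScale, div_pow, Real.sq_sqrt (by positivity)]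
        ring
    _ ≤ mobility ε s := by
        unfold mobility
        gcongr

theorem exists_eq_periodMean (hf : Continuous f) (hL : 0 < L) : ∃ x, f x = periodMean L f := by
  obtain ⟨x, -, hx⟩ := exists_eq_interval_average hL.ne hf.continuousOn
  refine ⟨x, ?_⟩
  rw [hx, interval_average_eq, sub_zero, smul_eq_mul, ← one_div, periodMean]

theorem mul_derivEnergy_one_le_dissipation (hf : ContDiff ℝ 3 f) (hper : Periodic f L)
    (hL : 0 < L) (hε : 0 < ε) {μ : ℝ} (hμ : 0 ≤ μ) (hmob : ∀ x, μ ≤ mobility ε (f x)) :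
    μ * derivEnergy L 1 f ≤ L ^ 4 * dissipation ε L f := by
  have hpoincare₁ : derivEnergy L 1 f ≤ L ^ 2 * derivEnergy L 2 f :=
    derivEnergy_one_le_derivEnergy_two (hf.of_le (by norm_num)) hper hL
  have hpoincare₂ : derivEnergy L 2 f ≤ L ^ 2 * derivEnergy L 3 f :=
    derivEnergy_one_le_derivEnergy_two hf.deriv' (periodic_deriv hper) hL
  have hcoercive : μ * derivEnergy L 3 f ≤ dissipation ε L f := by
    rw [derivEnergy, ← integral_const_mul]
    refine integral_mono hL.le ((((hf.iterate_deriv' 0 3).continuous.pow 2).const_mul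
      μ).intervalIntegrable _ _) ((continuous_mobility_mul_sq hε hf).intervalIntegrable _ _) ?_
    exact fun x => mul_le_mul_of_nonneg_right (hmob x) (sq_nonneg _)
  calc μ * derivEnergy L 1 f ≤ μ * (L ^ 2 * (L ^ 2 * derivEnergy L 3 f)) := by
        gcongr
        exact hpoincare₁.trans (by gcongr)
    _ = L ^ 4 * (μ * derivEnergy L 3 f) := by ring
    _ ≤ L ^ 4 * dissipation ε L f := by gcongr

theorem sq_mul_derivEnergy_one_le_of_le_slope (hf : ContDiff ℝ 3 f) (hper : Periodic f L)
    (hL : 0 < L) (hnonneg : ∀ x, 0 ≤ f x) (hε : 0 < ε) {a : ℝ} (ha : 0 ≤ a)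
    (hosc : a ^ 2 ≤ 4 * L * derivEnergy L 1 f) :
    a ^ 2 * derivEnergy L 1 f
      ≤ 32 * L ^ 4 * dissipation ε L f + 128 * L ^ 2 * (√ε * a * derivEnergy L 2 f) := by
  obtain ⟨M, hM, hslope, hM'⟩ := exists_abs_deriv_max_and_le hf hper hL hnonneg hε
  have hD : 0 ≤ dissipation ε L f := dissipation_nonneg hε.le hL.le
  have hE : 0 ≤ derivEnergy L 2 f := derivEnergy_nonneg hL.le 2
  have henergy : derivEnergy L 1 f ≤ L * M ^ 2 :=
    derivEnergy_one_le_of_sq_deriv_le (hf.of_le (by norm_num)) hL.le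
      fun x => sq_le_sq.2 ((hslope x).trans_eq (abs_of_nonneg hM).symm)
  have haM : a ≤ 2 * L * M := by
    refine le_of_sq_le_sq ?_ (by positivity)
    calc a ^ 2 ≤ 4 * L * derivEnergy L 1 f := hosc
      _ ≤ 4 * L * (L * M ^ 2) := by gcongr
      _ = (2 * L * M) ^ 2 := by ring
  have hbound : a ^ 2 * derivEnergy L 1 f ≤ 2 * L ^ 2 * a * M ^ 3 :=
    calc a ^ 2 * derivEnergy L 1 f ≤ a * (2 * L * M) * (L * M ^ 2) := by
          rw [sq]
          gcongr
          exact derivEnergy_nonneg hL.le 1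
      _ = 2 * L ^ 2 * a * M ^ 3 := by ring
  rcases hM' with hcube | hfourth
  · calc a ^ 2 * derivEnergy L 1 f ≤ 2 * L ^ 2 * a * (64 * √ε * derivEnergy L 2 f) :=
          hbound.trans (by gcongr)
      _ ≤ _ := by linarith [(by positivity : 0 ≤ 32 * L ^ 4 * dissipation ε L f)]
  · calc a ^ 2 * derivEnergy L 1 f ≤ 2 * L ^ 2 * (2 * L * M) * M ^ 3 :=
          hbound.trans (by gcongr)
      _ = 4 * L ^ 3 * M ^ 4 := by ring
      _ ≤ 4 * L ^ 3 * (8 * (L * dissipation ε L f)) := by gcongr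
      _ ≤ _ := by
        linarith [(by positivity : 0 ≤ 128 * L ^ 2 * (√ε * a * derivEnergy L 2 f))]

/-- Either the oscillation of `f` is comparable to its mean, and the slope dichotomy applies, or `f`
stays above half its mean, where the mobility is at least `a² / 16`. -/
theorem sq_coercivityScale_mul_derivEnergy_one_le (hf : ContDiff ℝ 3 f) (hper : Periodic f L)
    (hL : 0 < L) (hε : 0 < ε) (hbd : ∀ x, f x ∈ Icc 0 K) :
    coercivityScale ε K (periodMean L f) ^ 2 * derivEnergy L 1 f
      ≤ 32 * L ^ 4 * dissipation ε L f
        + 128 * L ^ 2 * (√ε * coercivityScale ε K (periodMean L f) * derivEnergy L 2 f) := by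
  set a := coercivityScale ε K (periodMean L f) with ha
  obtain ⟨z, hz⟩ := exists_eq_periodMean hf.continuous hL
  rw [← hz] at ha
  have ha₀ : 0 ≤ a := ha ▸ coercivityScale_nonneg
  have haz : a ≤ f z := ha ▸ coercivityScale_le_self hε (hbd z).1 (hbd z).2
  have hosc (x : ℝ) : (f x - f z) ^ 2 ≤ L * derivEnergy L 1 f :=
    sq_sub_le_period_mul_derivEnergy (hf.of_le (by norm_num)) hper hL x z
  have hE : 0 ≤ derivEnergy L 2 f := derivEnergy_nonneg hL.le 2
  rcases le_total (f z ^ 2) (4 * L * derivEnergy L 1 f) with hlarge | hsmall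
  · exact sq_mul_derivEnergy_one_le_of_le_slope hf hper hL (fun x => (hbd x).1) hε ha₀
      ((pow_le_pow_left₀ ha₀ haz 2).trans hlarge)
  · have hhalf (x : ℝ) : f z / 2 ≤ f x := by
      have h := abs_le_of_sq_le_sq' (by linarith [hosc x] : (f x - f z) ^ 2 ≤ (f z / 2) ^ 2)
        (by linarith [(hbd z).1])
      linarith [h.1]
    have hmob (x : ℝ) : a ^ 2 / 16 ≤ mobility ε (f x) :=
      ha ▸ sq_coercivityScale_le_mobility hε (hbd z).1 (hhalf x) (hbd x).2
    have hcoercive := mul_derivEnergy_one_le_dissipation hf hper hL hε (by positivity) hmob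
    have hD : 0 ≤ L ^ 4 * dissipation ε L f :=
      mul_nonneg (by positivity) (dissipation_nonneg hε.le hL.le)
    linarith [(by positivity : 0 ≤ 128 * L ^ 2 * (√ε * a * derivEnergy L 2 f))]

end Coercivity

section SpaceTime

variable {E : Type*} [NormedAddCommGroup E] [NormedSpace ℝ E] {v : ℝ → ℝ → E} {t x : ℝ}

theorem deriv_right_eq_fderiv_uncurry (hv : DifferentiableAt ℝ (uncurry v) (t, x)) :
    deriv (v t) x = fderiv ℝ (uncurry v) (t, x) (0, 1) :=
  (hv.hasFDerivAt.comp_hasDerivAt x ((hasDerivAt_const x t).prodMk (hasDerivAt_id x))).deriv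

theorem deriv_left_eq_fderiv_uncurry (hv : DifferentiableAt ℝ (uncurry v) (t, x)) :
    deriv (fun τ => v τ x) t = fderiv ℝ (uncurry v) (t, x) (1, 0) :=
  (hv.hasFDerivAt.comp_hasDerivAt (f := fun τ => (τ, x)) t ((hasDerivAt_id t).prodMk
    (hasDerivAt_const t x))).deriv

theorem contDiff_uncurry_deriv_right {n : WithTop ℕ∞} (hv : ContDiff ℝ (n + 1) (uncurry v)) :
    ContDiff ℝ n (uncurry fun t => deriv (v t)) := by
  have heq : (uncurry fun t => deriv (v t)) = fun p => fderiv ℝ (uncurry v) p (0, 1) :=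
    funext fun p => deriv_right_eq_fderiv_uncurry (hv.differentiable (by simp) p)
  rw [heq]
  exact (hv.fderiv_right le_rfl).clm_apply contDiff_const

theorem contDiff_uncurry_deriv_left {n : WithTop ℕ∞} (hv : ContDiff ℝ (n + 1) (uncurry v)) :
    ContDiff ℝ n (uncurry fun t x => deriv (fun τ => v τ x) t) := by
  have heq : (uncurry fun t x => deriv (fun τ => v τ x) t)
      = fun p => fderiv ℝ (uncurry v) p (1, 0) :=
    funext fun p => deriv_left_eq_fderiv_uncurry (hv.differentiable (by simp) p)
  rw [heq]
  exact (hv.fderiv_right le_rfl).clm_apply contDiff_const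

theorem deriv_left_deriv_right_comm (hv : ContDiff ℝ 2 (uncurry v)) (t x : ℝ) :
    deriv (fun τ => deriv (v τ) x) t = deriv (fun y => deriv (fun τ => v τ y) t) x := by
  have hdiff : Differentiable ℝ (uncurry v) := hv.differentiable two_ne_zero
  have hdiff' : DifferentiableAt ℝ (fderiv ℝ (uncurry v)) (t, x) :=
    (hv.fderiv_right (m := 1) (by norm_num)).differentiable one_ne_zero _
  have hpartial (e : ℝ × ℝ) : DifferentiableAt ℝ
      (uncurry fun τ y => fderiv ℝ (uncurry v) (τ, y) e) (t, x) :=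
    hdiff'.clm_apply (differentiableAt_const e)
  have hsecond (e e' : ℝ × ℝ) :
      fderiv ℝ (uncurry fun τ y => fderiv ℝ (uncurry v) (τ, y) e) (t, x) e'
        = fderiv ℝ (fderiv ℝ (uncurry v)) (t, x) e' e := by
    have h := hdiff'.hasFDerivAt.clm_apply (hasFDerivAt_const e (t, x))
    rw [show (uncurry fun τ y => fderiv ℝ (uncurry v) (τ, y) e)
      = fun p => fderiv ℝ (uncurry v) p e from rfl, h.fderiv]
    simp
  have hsymm : IsSymmSndFDerivAt ℝ (uncurry v) (t, x) :=
    hv.contDiffAt.isSymmSndFDerivAt (by simp)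
  simp only [deriv_right_eq_fderiv_uncurry (hdiff _), deriv_left_eq_fderiv_uncurry (hdiff _)]
  rw [deriv_left_eq_fderiv_uncurry (v := fun τ y => fderiv ℝ (uncurry v) (τ, y) (0, 1))
      (hpartial _), deriv_right_eq_fderiv_uncurry
      (v := fun τ y => fderiv ℝ (uncurry v) (τ, y) (1, 0)) (hpartial _), hsecond, hsecond]
  exact hsymm _ _

theorem hasDerivAt_integral_of_contDiff (hv : ContDiff ℝ 1 (uncurry v)) (a b t : ℝ) :
    HasDerivAt (fun τ => ∫ x in a..b, v τ x) (∫ x in a..b, deriv (fun τ => v τ x) t) t := by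
  have hv' : Continuous (uncurry fun t x => deriv (fun τ => v τ x) t) :=
    (contDiff_uncurry_deriv_left (n := 0) (by simpa using hv)).continuous
  obtain ⟨C, hC⟩ := ((isCompact_Icc (a := t - 1) (b := t + 1)).prod
    (isCompact_uIcc (a := a) (b := b))).exists_bound_of_continuousOn hv'.continuousOn
  refine (intervalIntegral.hasDerivAt_integral_of_dominated_loc_of_deriv_le
    (F := v) (F' := fun t x => deriv (fun τ => v τ x) t) (bound := fun _ => C)
    (Icc_mem_nhds (sub_one_lt t) (lt_add_one t))
    ?_ ?_ ?_ ?_ ?_ ?_).2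
  · exact .of_forall fun τ => (hv.continuous.uncurry_left τ).aestronglyMeasurable
  · exact (hv.continuous.uncurry_left t).intervalIntegrable _ _
  · exact (hv'.uncurry_left t).aestronglyMeasurable
  · exact .of_forall fun x hx τ hτ => hC (τ, x) ⟨hτ, uIoc_subset_uIcc hx⟩
  · exact intervalIntegrable_const
  · exact .of_forall fun x _ τ _ =>
      ((hv.comp (contDiff_prodMk_left x)).differentiable_one τ).hasDerivAt

end SpaceTime

theorem le_exp_mul_add_integral_of_deriv_le {J J' g : ℝ → ℝ} {a b c : ℝ} (hc : 0 ≤ c)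
    (hJ : ∀ t ∈ Icc a b, HasDerivAt J (J' t) t) (hg : Continuous g)
    (hnonneg : ∀ t ∈ Icc a b, 0 ≤ g t)
    (hle : ∀ t ∈ Icc a b, J' t ≤ -c * J t + g t) {t : ℝ} (ht : t ∈ Icc a b) :
    J t ≤ Real.exp (-c * (t - a)) * J a + ∫ s in a..t, g s := by
  have hsub (s : ℝ) (hs : s ∈ Icc a b) :
      HasDerivAt (fun s => J s - ∫ r in a..s, g r) (J' s - g s) s :=
    (hJ s hs).sub (hg.integral_hasStrictDerivAt a s).hasDerivAt
  have hgronwall := le_gronwallBound_of_liminf_deriv_right_le (K := -c) (ε := 0)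
    (f := fun s => J s - ∫ r in a..s, g r) (f' := fun s => J' s - g s)
    (fun s hs => (hsub s hs).continuousAt.continuousWithinAt)
    (fun s hs _ hr => (hsub s (Ico_subset_Icc_self hs)).hasDerivWithinAt.liminf_right_slope_le hr)
    le_rfl (fun s hs => by
      have hint : 0 ≤ ∫ r in a..s, g r :=
        integral_nonneg hs.1 fun r hr => hnonneg r ⟨hr.1, hr.2.trans hs.2.le⟩
      nlinarith [hle s (Ico_subset_Icc_self hs)]) t ht
  rw [gronwallBound_ε0, integral_same, sub_zero, mul_comm] at hgronwall
  linarith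

/-- The flux `f_ε(w) ∂ₓ³ w` of the thin-film equation. -/
noncomputable def thinFilmFlux (ε : ℝ) (w : ℝ → ℝ) (x : ℝ) : ℝ :=
  mobility ε (w x) * deriv^[3] w x

/-- `v` is a classical, spatially `L`-periodic solution of the thin-film equation
`∂ₜ v = -∂ₓ (f_ε(v) ∂ₓ³ v)` for times in `[0, T]`. Taking `v` to be of class `C⁴` on all of `ℝ × ℝ`
makes the two-sided time derivatives at `0` and `T` meaningful. -/
structure IsThinFilmSolution (ε L T : ℝ) (v : ℝ → ℝ → ℝ) : Prop where
  contDiff : ContDiff ℝ 4 (uncurry v)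
  periodic : ∀ t ∈ Icc 0 T, Periodic (v t) L
  deriv_time : ∀ t ∈ Icc 0 T, ∀ x, deriv (fun τ => v τ x) t = -deriv (thinFilmFlux ε (v t)) x

namespace IsThinFilmSolution

variable {ε L T t : ℝ} {v : ℝ → ℝ → ℝ}

theorem contDiff_slice (h : IsThinFilmSolution ε L T v) (t : ℝ) : ContDiff ℝ 4 (v t) :=
  h.contDiff.comp (contDiff_prodMk_right t)

theorem contDiff_flux (h : IsThinFilmSolution ε L T v) (hε : 0 < ε) (t : ℝ) :
    ContDiff ℝ 1 (thinFilmFlux ε (v t)) :=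
  ((contDiff_mobility hε).comp ((h.contDiff_slice t).of_le (by norm_num))).mul
    ((h.contDiff_slice t).iterate_deriv' 1 3)

theorem periodic_flux (h : IsThinFilmSolution ε L T v) (ht : t ∈ Icc 0 T) :
    Periodic (thinFilmFlux ε (v t)) L := fun x => by
  rw [thinFilmFlux, h.periodic t ht x, periodic_iterate_deriv (h.periodic t ht) 3 x, thinFilmFlux]

theorem periodMean_eq (h : IsThinFilmSolution ε L T v) (hε : 0 < ε) (ht : t ∈ Icc 0 T) :
    periodMean L (v t) = periodMean L (v 0) := by
  have hderiv (s : ℝ) (hs : s ∈ Icc 0 T) : HasDerivAt (fun τ => ∫ x in (0 : ℝ)..L, v τ x) 0 s := by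
    have hzero : ∫ x in (0 : ℝ)..L, deriv (fun τ => v τ x) s = 0 := by
      simp only [h.deriv_time s hs, integral_neg,
        integral_deriv_eq_zero_of_periodic (h.contDiff_flux hε s) (h.periodic_flux hs), neg_zero]
    have hmass := hasDerivAt_integral_of_contDiff (h.contDiff.of_le (by norm_num)) 0 L s
    rwa [hzero] at hmass
  have hconst := constant_of_has_deriv_right_zero
    (fun s hs => (hderiv s hs).continuousAt.continuousWithinAt)
    (fun s hs => (hderiv s (Ico_subset_Icc_self hs)).hasDerivWithinAt) t ht
  simp only [periodMean, hconst]

theorem integral_deriv_mul_deriv_time_deriv (h : IsThinFilmSolution ε L T v) (hε : 0 < ε)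
    (ht : t ∈ Icc 0 T) :
    ∫ x in (0 : ℝ)..L, deriv (v t) x * deriv (fun τ => deriv (v τ) x) t
      = -dissipation ε L (v t) := by
  have hv := h.contDiff_slice t
  have hper := h.periodic t ht
  have htime : (fun x => deriv (fun τ => v τ x) t) = fun x => -deriv (thinFilmFlux ε (v t)) x :=
    funext (h.deriv_time t ht)
  have htime_contDiff : ContDiff ℝ 1 fun x => deriv (fun τ => v τ x) t :=
    (contDiff_uncurry_deriv_left (n := 1) (h.contDiff.of_le (by norm_num))).comp
      (contDiff_prodMk_right t)
  have htime_periodic : Periodic (fun x => deriv (fun τ => v τ x) t) L := by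
    rw [htime]
    exact fun x => congrArg Neg.neg (periodic_deriv (h.periodic_flux ht) x)
  calc ∫ x in (0 : ℝ)..L, deriv (v t) x * deriv (fun τ => deriv (v τ) x) t
      = ∫ x in (0 : ℝ)..L, deriv (v t) x * deriv (fun y => deriv (fun τ => v τ y) t) x := by
        simp only [deriv_left_deriv_right_comm (h.contDiff.of_le (by norm_num))]
    _ = -∫ x in (0 : ℝ)..L, deriv^[2] (v t) x * deriv (fun τ => v τ x) t :=
        integral_mul_deriv_of_periodic ((hv.of_le (by norm_num)).iterate_deriv' 1 1)
          htime_contDiff (periodic_deriv hper) htime_periodic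
    _ = ∫ x in (0 : ℝ)..L, deriv^[2] (v t) x * deriv (thinFilmFlux ε (v t)) x := by
        simp only [h.deriv_time t ht, mul_neg, integral_neg, neg_neg]
    _ = -∫ x in (0 : ℝ)..L, deriv^[3] (v t) x * thinFilmFlux ε (v t) x :=
        integral_mul_deriv_of_periodic ((hv.of_le (by norm_num)).iterate_deriv' 1 2)
          (h.contDiff_flux hε t) (periodic_iterate_deriv hper 2) (h.periodic_flux ht)
    _ = -dissipation ε L (v t) := by
        simp only [dissipation, thinFilmFlux, mul_left_comm, sq]

theorem hasDerivAt_energy (h : IsThinFilmSolution ε L T v) (hε : 0 < ε) (ht : t ∈ Icc 0 T) :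
    HasDerivAt (fun τ => 1 / 2 * derivEnergy L 1 (v τ)) (-dissipation ε L (v t)) t := by
  have hv' : ContDiff ℝ 1 (uncurry fun τ => deriv (v τ)) :=
    contDiff_uncurry_deriv_right (h.contDiff.of_le (by norm_num))
  have hslice (x : ℝ) : HasDerivAt (fun τ => deriv (v τ) x) (deriv (fun τ => deriv (v τ) x) t) t :=
    ((hv'.comp (contDiff_prodMk_left x)).differentiable_one t).hasDerivAt
  have hint : 1 / 2 * ∫ x in (0 : ℝ)..L, deriv (fun τ => deriv (v τ) x ^ 2) t
      = -dissipation ε L (v t) := by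
    rw [← h.integral_deriv_mul_deriv_time_deriv hε ht, ← integral_const_mul]
    refine integral_congr fun x _ => ?_
    rw [((hslice x).fun_pow 2).deriv]
    push_cast
    ring
  rw [← hint]
  exact (hasDerivAt_integral_of_contDiff (v := fun τ x => deriv (v τ) x ^ 2)
    (hv'.pow 2) 0 L t).const_mul (1 / 2)

theorem continuous_derivEnergy_two (h : IsThinFilmSolution ε L T v) :
    Continuous fun t => derivEnergy L 2 (v t) := by
  have hv'' : ContDiff ℝ 2 (uncurry fun t => deriv (deriv (v t))) :=
    contDiff_uncurry_deriv_right (contDiff_uncurry_deriv_right (h.contDiff.of_le (by norm_num)))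
  exact continuous_parametric_intervalIntegral_of_continuous' (hv''.continuous.pow 2) 0 L

end IsThinFilmSolution

theorem stmt_16_general {ε K L T : ℝ} {v : ℝ → ℝ → ℝ} (hε : 0 < ε) (hL : 0 < L)
    (hv : IsThinFilmSolution ε L T v) (hbd : ∀ t ∈ Icc 0 T, ∀ x, v t x ∈ Icc 0 K)
    {t : ℝ} (ht : t ∈ Icc 0 T) :
    1 / 2 * derivEnergy L 1 (v t)
      ≤ Real.exp (-(1 / (16 * L ^ 4)) * coercivityScale ε K (periodMean L (v 0)) ^ 2 * t)
          * (1 / 2 * derivEnergy L 1 (v 0))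
        + 4 / L ^ 2 * √ε * coercivityScale ε K (periodMean L (v 0))
          * ∫ s in (0 : ℝ)..t, derivEnergy L 2 (v s) := by
  set a := coercivityScale ε K (periodMean L (v 0)) with ha
  have hdecay (s : ℝ) (hs : s ∈ Icc 0 T) : -dissipation ε L (v s)
      ≤ -(1 / (16 * L ^ 4) * a ^ 2) * (1 / 2 * derivEnergy L 1 (v s))
        + 4 / L ^ 2 * √ε * a * derivEnergy L 2 (v s) := by
    have hfun := sq_coercivityScale_mul_derivEnergy_one_le
      ((hv.contDiff_slice s).of_le (by norm_num)) (hv.periodic s hs) hL hε (hbd s hs)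
    rw [hv.periodMean_eq hε hs, ← ha] at hfun
    field_simp
    linarith
  have hgronwall := le_exp_mul_add_integral_of_deriv_le (by positivity)
    (fun s hs => hv.hasDerivAt_energy hε hs) (hv.continuous_derivEnergy_two.const_mul _)
    (fun s _ => mul_nonneg (mul_nonneg (by positivity) coercivityScale_nonneg)
      (derivEnergy_nonneg hL.le 2)) hdecay ht
  rwa [integral_const_mul, sub_zero, ← neg_mul] at hgronwall

/-- Deterministic exponential energy decay estimate (3.35): for every `L > 0` there are
`c₁, c₂ > 0` depending only on `L` such that for every `ε ∈ (0,1]`, `K > 0`, `T > 0`,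
and every smooth solution `v` of `∂ₜv = −∂ₓ(f_ε(v) ∂ₓ³v)` on `[0,T] × ℝ`, `L`-periodic
in `x`, with `0 < v ≤ K`, setting `ū = (1/L)∫₀ᴸ v(0)`, `a = ū²/√(ε+K²)` and
`J(t) = (1/2)∫₀ᴸ (∂ₓv(t))²`, one has for all `t ∈ [0,T]`:
`J(t) ≤ e^{−c₁ a² t} J(0) + c₂ √ε a ∫₀ᵗ∫₀ᴸ (∂ₓ²v)²`. -/
theorem stmt_16 (L : ℝ) (hL : 0 < L) :
    ∃ c₁ c₂ : ℝ, 0 < c₁ ∧ 0 < c₂ ∧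
      ∀ (ε K T : ℝ), ε ∈ Set.Ioc (0 : ℝ) 1 → 0 < K → 0 < T →
        ∀ v : ℝ → ℝ → ℝ, ContDiff ℝ (⊤ : ℕ∞) (Function.uncurry v) →
          (∀ t, Function.Periodic (v t) L) →
          (∀ t ∈ Set.Icc (0 : ℝ) T, ∀ x : ℝ,
            deriv (fun τ => v τ x) t =
              -deriv (fun y => (v t y ^ 4 / (ε + v t y ^ 2)) * deriv^[3] (v t) y) x) →
          (∀ t ∈ Set.Icc (0 : ℝ) T, ∀ x : ℝ, 0 < v t x ∧ v t x ≤ K) →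
          ∀ t ∈ Set.Icc (0 : ℝ) T,
            (1 / 2) * ∫ x in (0:ℝ)..L, (deriv (v t) x) ^ 2 ≤
              Real.exp (-c₁ *
                  (((1 / L) * ∫ x in (0:ℝ)..L, v 0 x) ^ 2 / Real.sqrt (ε + K ^ 2)) ^ 2 * t) *
                ((1 / 2) * ∫ x in (0:ℝ)..L, (deriv (v 0) x) ^ 2) +
              c₂ * Real.sqrt ε *
                (((1 / L) * ∫ x in (0:ℝ)..L, v 0 x) ^ 2 / Real.sqrt (ε + K ^ 2)) *
                ∫ s in (0:ℝ)..t, ∫ x in (0:ℝ)..L, (deriv^[2] (v s) x) ^ 2 := by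
  refine ⟨1 / (16 * L ^ 4), 4 / L ^ 2, by positivity, by positivity, ?_⟩
  intro ε K T hε _ _ v hv hper heq hbd t ht
  exact stmt_16_general hε.1 hL ⟨contDiff_infty.1 hv 4, fun t _ => hper t, heq⟩
    (fun t ht x => ⟨(hbd t ht x).1.le, (hbd t ht x).2⟩) ht
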